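/- arXiv:2010.01882 — 3 statements merged into one kernel-verified Lean document; each statement's English description precedes it below -/
import Mathlib

section
/- A pair (t, M), with t a natural number and M = {p₁, p₂, p₃} a multiset of three natural numbers, is the symbol of some three-card hand of the SET deck if and only if: t ≤ 3, each pᵢ ≤ 3, each pᵢ + t ≤ 3, and t + p₁ + p₂ + p₃ ≤ 4. -/
/-- A card of the SET deck: four attributes, each with three values. -/
abbrev Card := Fin 4 → Fin 3

/-- The number of attributes common to all three cards. -/
def tCount (x y z : Card) : ℕ :=
  (Finset.univ.filter fun a : Fin 4 => x a = y a ∧ y a = z a).card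

/-- The pair-count of the pair `(x, y)` within the triple `{x, y, z}`: the number of
attributes at which `x` and `y` agree but not all three cards agree. -/
def pairCount (x y z : Card) : ℕ :=
  (Finset.univ.filter fun a : Fin 4 => x a = y a ∧ y a ≠ z a).card

/-- The symbol of a three-card hand `{x, y, z}`: the number of all-common attributes,
together with the (unordered) multiset of the three pair-counts. -/
def symbol (x y z : Card) : ℕ × Multiset ℕ :=
  (tCount x y z, {pairCount x y z, pairCount y z x, pairCount z x y})

theorem aux_lt (x y z : Card) (h : x ≠ y) : tCount x y z + pairCount x y z ≤ 3 := by
  have hs : tCount x y z + pairCount x y z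
      = ∑ a : Fin 4, (if x a = y a then 1 else 0) := by
    unfold tCount pairCount
    rw [Finset.card_filter, Finset.card_filter, ← Finset.sum_add_distrib]
    refine Finset.sum_congr rfl fun a _ => ?_
    by_cases h1 : x a = y a <;> by_cases h2 : y a = z a <;> simp [h1, h2]
  obtain ⟨b, hb⟩ := Function.ne_iff.mp h
  have hlt : ∑ a : Fin 4, (if x a = y a then 1 else 0) < ∑ _a : Fin 4, 1 := by
    refine Finset.sum_lt_sum (fun a _ => ?_) ⟨b, Finset.mem_univ _, ?_⟩
    · split_ifs <;> simp
    · simp [hb]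
  simp only [Finset.sum_const, Finset.card_univ, Fintype.card_fin, smul_eq_mul] at hlt
  omega

theorem tCount_rot (x y z : Card) : tCount y z x = tCount x y z := by
  unfold tCount
  congr 1
  ext a
  simp only [Finset.mem_filter, Finset.mem_univ, true_and]
  constructor <;> rintro ⟨h1, h2⟩ <;> simp [h1, h2]

theorem aux_sum (x y z : Card) :
    tCount x y z + pairCount x y z + pairCount y z x + pairCount z x y ≤ 4 := by
  unfold tCount pairCount
  simp only [Finset.card_filter, ← Finset.sum_add_distrib]
  calc _ ≤ ∑ _a : Fin 4, 1 := by
        refine Finset.sum_le_sum fun a _ => ?_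
        generalize x a = u
        generalize y a = v
        generalize z a = w
        revert u v w
        decide
    _ = 4 := by simp

/-- The three values at an attribute, in a canonical hand. -/
def mk (t p q r : ℕ) (a b c d e : Fin 3) : Card := fun i =>
  if i.val < t then a else if i.val < t + p then b else if i.val < t + p + q then c
  else if i.val < t + p + q + r then d else e

/-- The canonical hand realizes the symbol. -/
def Good (t p q r : ℕ) : Prop :=
    mk t p q r 0 0 1 0 0 ≠ mk t p q r 0 0 0 1 1 ∧
    mk t p q r 0 0 1 0 0 ≠ mk t p q r 0 1 0 0 2 ∧
    mk t p q r 0 0 0 1 1 ≠ mk t p q r 0 1 0 0 2 ∧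
    tCount (mk t p q r 0 0 1 0 0) (mk t p q r 0 0 0 1 1) (mk t p q r 0 1 0 0 2) = t ∧
    pairCount (mk t p q r 0 0 1 0 0) (mk t p q r 0 0 0 1 1) (mk t p q r 0 1 0 0 2) = p ∧
    pairCount (mk t p q r 0 0 0 1 1) (mk t p q r 0 1 0 0 2) (mk t p q r 0 0 1 0 0) = q ∧
    pairCount (mk t p q r 0 1 0 0 2) (mk t p q r 0 0 1 0 0) (mk t p q r 0 0 0 1 1) = r

instance (t p q r : ℕ) : Decidable (Good t p q r) := by
  unfold Good
  infer_instance

theorem aux_real : ∀ t p q r : Fin 4,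
    (p.val + t.val ≤ 3 ∧ q.val + t.val ≤ 3 ∧ r.val + t.val ≤ 3 ∧
      t.val + p.val + q.val + r.val ≤ 4) → Good t.val p.val q.val r.val := by
  decide +kernel

/-- A tuple `(t, {p₁, p₂, p₃})` is the symbol of a three-card hand if and only if
`t ≤ 3`, each `pᵢ ≤ 3`, each `pᵢ + t ≤ 3`, and `t + p₁ + p₂ + p₃ ≤ 4`. -/
theorem symbol_realizable_iff (t p₁ p₂ p₃ : ℕ) :
    (∃ x y z : Card, x ≠ y ∧ x ≠ z ∧ y ≠ z ∧
        symbol x y z = (t, ({p₁, p₂, p₃} : Multiset ℕ))) ↔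
      (t ≤ 3 ∧ (p₁ ≤ 3 ∧ p₂ ≤ 3 ∧ p₃ ≤ 3) ∧
        (p₁ + t ≤ 3 ∧ p₂ + t ≤ 3 ∧ p₃ + t ≤ 3) ∧
        t + p₁ + p₂ + p₃ ≤ 4) := by
  constructor
  · rintro ⟨x, y, z, hxy, hxz, hyz, hs⟩
    have h1 := aux_lt x y z hxy
    have h2 := aux_lt y z x hyz
    have h3 := aux_lt z x y hxz.symm
    have h4 := aux_sum x y z
    have h5 := tCount_rot x y z
    have h6 := tCount_rot z x y
    simp only [symbol, Prod.mk.injEq] at hs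
    obtain ⟨ht, hm⟩ := hs
    have hsum := congrArg Multiset.sum hm
    simp only [Multiset.insert_eq_cons, Multiset.sum_cons, Multiset.sum_singleton] at hsum
    have key : ∀ p ∈ ({p₁, p₂, p₃} : Multiset ℕ), p + t ≤ 3 := by
      rw [← hm]
      intro p hp
      simp only [Multiset.insert_eq_cons, Multiset.mem_cons, Multiset.mem_singleton] at hp
      omega
    have k1 := key p₁ (by simp)
    have k2 := key p₂ (by simp)
    have k3 := key p₃ (by simp)
    omega
  · rintro ⟨ht, ⟨h1, h2, h3⟩, ⟨k1, k2, k3⟩, hs⟩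
    obtain ⟨a, b, c, d, e, f, g⟩ := aux_real ⟨t, by omega⟩ ⟨p₁, by omega⟩ ⟨p₂, by omega⟩
      ⟨p₃, by omega⟩ ⟨k1, k2, k3, hs⟩
    refine ⟨_, _, _, a, b, c, ?_⟩
    dsimp only at d e f g ⊢
    rw [symbol, d, e, f, g]
end

section
/- The 1080 Sets in the SET deck split by their number of all-common attributes as follows: exactly 216 Sets have 0 attributes common to all three cards, exactly 432 have 1, exactly 324 have 2, and exactly 108 have 3. -/
/-- A finite set of cards is a `Set` if it has three cards and, in each attribute,
the values are either all equal or pairwise distinct. -/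
def IsSet (s : Finset Card) : Prop :=
  s.card = 3 ∧ ∀ a : Fin 4,
    (∀ x ∈ s, ∀ y ∈ s, x a = y a) ∨ (∀ x ∈ s, ∀ y ∈ s, x ≠ y → x a ≠ y a)

instance : DecidablePred IsSet := fun s => by
  have : ∀ a : Fin 4,
      Decidable ((∀ x ∈ s, ∀ y ∈ s, x a = y a) ∨ ∀ x ∈ s, ∀ y ∈ s, x ≠ y → x a ≠ y a) :=
    fun _ => instDecidableOr
  unfold IsSet
  infer_instance

/-- The number of attributes common to all cards of a hand. -/
def allCommonCount (s : Finset Card) : ℕ :=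
  (Finset.univ.filter fun a : Fin 4 => ∀ x ∈ s, ∀ y ∈ s, x a = y a).card

/-- The third card. -/
def third (x y : Card) : Card := fun a => -(x a + y a)

lemma fin3_third : ∀ p q : Fin 3, p ≠ q → p ≠ -(p + q) ∧ q ≠ -(p + q) := by decide

lemma fin3_same : ∀ p : Fin 3, -(p + p) = p := by decide

lemma fin3_eq : ∀ p q r : Fin 3, p ≠ q → p ≠ r → q ≠ r → r = -(p + q) := by decide

lemma third_ne {x y : Card} (h : x ≠ y) : x ≠ third x y ∧ y ≠ third x y := by
  obtain ⟨a, ha⟩ := Function.ne_iff.mp h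
  have := fin3_third _ _ ha
  exact ⟨fun e => this.1 (congrFun e a), fun e => this.2 (congrFun e a)⟩

lemma common_iff (x y : Card) (a : Fin 4) :
    (∀ u ∈ ({x, y, third x y} : Finset Card), ∀ v ∈ ({x, y, third x y} : Finset Card), u a = v a)
      ↔ x a = y a := by
  constructor
  · intro h
    exact h x (by simp) y (by simp)
  · intro h
    have h3 : third x y a = y a := by
      simp only [third, h, fin3_same]
    intro u hu v hv
    simp only [Finset.mem_insert, Finset.mem_singleton] at hu hv
    rcases hu with rfl | rfl | rfl <;> rcases hv with rfl | rfl | rfl <;> simp [h, h3]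

lemma isSet_third {x y : Card} (h : x ≠ y) : IsSet {x, y, third x y} := by
  refine ⟨Finset.card_eq_three.mpr ⟨x, y, _, h, (third_ne h).1, (third_ne h).2, rfl⟩, fun a => ?_⟩
  by_cases ha : x a = y a
  · exact Or.inl ((common_iff x y a).mpr ha)
  · right
    have h3 : x a ≠ third x y a ∧ y a ≠ third x y a := fin3_third _ _ ha
    intro u hu v hv
    simp only [Finset.mem_insert, Finset.mem_singleton] at hu hv
    rcases hu with hu | hu | hu <;> rcases hv with hv | hv | hv <;> rw [hu, hv] <;> intro huv
    · exact absurd rfl huv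
    · exact ha
    · exact h3.1
    · exact Ne.symm ha
    · exact absurd rfl huv
    · exact h3.2
    · exact h3.1.symm
    · exact h3.2.symm
    · exact absurd rfl huv

lemma eq_third {s : Finset Card} (hs : IsSet s) {x y : Card} (hx : x ∈ s) (hy : y ∈ s)
    (h : x ≠ y) : ({x, y, third x y} : Finset Card) = s := by
  have h2 : ({x, y} : Finset Card).card < s.card := by
    rw [hs.1, Finset.card_pair h]; norm_num
  obtain ⟨z, hz, hzn⟩ := Finset.exists_mem_notMem_of_card_lt_card h2
  simp only [Finset.mem_insert, Finset.mem_singleton, not_or] at hzn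
  have e : z = third x y := by
    funext a
    rcases hs.2 a with h' | h'
    · have e1 := h' x hx y hy
      have e2 := h' z hz y hy
      simp only [third, e1, e2, fin3_same]
    · exact fin3_eq _ _ _ (h' x hx y hy h) (h' x hx z hz (Ne.symm hzn.1))
        (h' y hy z hz (Ne.symm hzn.2))
  apply Finset.eq_of_subset_of_card_le
  · intro u hu
    simp only [Finset.mem_insert, Finset.mem_singleton] at hu
    rcases hu with rfl | rfl | rfl
    · exact hx
    · exact hy
    · exact e ▸ hz
  · rw [hs.1, (isSet_third h).1]

/-- Number of attributes in which two cards agree. -/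
def agree (x y : Card) : ℕ := (Finset.univ.filter fun a : Fin 4 => x a = y a).card

lemma count_third (x y : Card) : allCommonCount {x, y, third x y} = agree x y := by
  unfold allCommonCount agree
  congr 1
  ext a
  simp only [Finset.mem_filter, Finset.mem_univ, true_and]
  exact common_iff x y a

lemma agree_self (x : Card) : agree x x = 4 := by simp [agree]

set_option maxRecDepth 20000 in
lemma pairs_card (k : ℕ) :
    (Finset.univ.filter fun p : Card × Card => agree p.1 p.2 = k).card
      = 81 * (Finset.univ.filter fun d : Card => agree d 0 = k).card := by
  have h : (Finset.univ : Finset Card).card = 81 := by simp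
  rw [← h, ← Finset.card_product]
  symm
  refine Finset.card_bij' (fun p _ => (p.1 + p.2, p.1)) (fun p _ => (p.2, p.1 - p.2)) ?_ ?_ ?_ ?_
  · intro p hp
    have hq := (Finset.mem_filter.mp (Finset.mem_product.mp hp).2).2
    refine Finset.mem_filter.mpr ⟨Finset.mem_univ _, ?_⟩
    rw [← hq]
    simp only [agree, Pi.add_apply, add_eq_left, Pi.zero_apply]
  · intro p hp
    have hq := (Finset.mem_filter.mp hp).2
    refine Finset.mem_product.mpr ⟨Finset.mem_univ _, Finset.mem_filter.mpr ⟨Finset.mem_univ _, ?_⟩⟩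
    rw [← hq]
    simp only [agree, Pi.sub_apply, sub_eq_zero, Pi.zero_apply]
  · intro p hp
    simp
  · intro p hp
    simp

set_option maxRecDepth 20000 in
lemma sets_card (k : ℕ) (hk : k < 4) :
    6 * (((Finset.univ : Finset Card).powersetCard 3).filter
        fun s => IsSet s ∧ allCommonCount s = k).card
      = 81 * (Finset.univ.filter fun d : Card => agree d 0 = k).card := by
  rw [← pairs_card]
  symm
  have hne : ∀ p : Card × Card, agree p.1 p.2 = k → p.1 ≠ p.2 := by
    intro p hp e
    rw [e, agree_self] at hp
    omega
  rw [Finset.card_eq_sum_card_fiberwise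
    (f := fun p : Card × Card => ({p.1, p.2, third p.1 p.2} : Finset Card))
    (t := ((Finset.univ : Finset Card).powersetCard 3).filter
        fun s => IsSet s ∧ allCommonCount s = k), Finset.sum_const_nat (m := 6), mul_comm]
  · intro s hs
    obtain ⟨-, hs, hc⟩ := Finset.mem_filter.mp hs
    have : ((Finset.univ.filter fun p : Card × Card => agree p.1 p.2 = k).filter
        fun p => ({p.1, p.2, third p.1 p.2} : Finset Card) = s) = s.offDiag := by
      ext ⟨x, y⟩
      simp only [Finset.mem_filter, Finset.mem_univ, true_and, Finset.mem_offDiag]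
      constructor
      · rintro ⟨h1, rfl⟩
        exact ⟨by simp, by simp, hne (x, y) h1⟩
      · rintro ⟨hx, hy, h⟩
        have e := eq_third hs hx hy h
        refine ⟨?_, e⟩
        rw [← count_third, e, hc]
    rw [this, Finset.offDiag_card, hs.1]
  · intro p hp
    have hq : agree p.1 p.2 = k := (Finset.mem_filter.mp (Finset.mem_coe.mp hp)).2
    have h := isSet_third (hne p hq)
    simp only [Finset.coe_filter, Set.mem_ofPred_eq, Finset.mem_powersetCard]
    exact ⟨⟨Finset.subset_univ _, h.1⟩, h, by rw [count_third, hq]⟩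

lemma agree_counts :
    (Finset.univ.filter fun d : Card => agree d 0 = 0).card = 16 ∧
    (Finset.univ.filter fun d : Card => agree d 0 = 1).card = 32 ∧
    (Finset.univ.filter fun d : Card => agree d 0 = 2).card = 24 ∧
    (Finset.univ.filter fun d : Card => agree d 0 = 3).card = 8 := by
  decide +kernel

/-- The 1080 `Sets` split by their number of all-common attributes:
216 have none, 432 have one, 324 have two, and 108 have three. -/
theorem sets_split_by_common_attributes :
    (((Finset.univ : Finset Card).powersetCard 3).filter
        fun s => IsSet s ∧ allCommonCount s = 0).card = 216 ∧
    (((Finset.univ : Finset Card).powersetCard 3).filter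
        fun s => IsSet s ∧ allCommonCount s = 1).card = 432 ∧
    (((Finset.univ : Finset Card).powersetCard 3).filter
        fun s => IsSet s ∧ allCommonCount s = 2).card = 324 ∧
    (((Finset.univ : Finset Card).powersetCard 3).filter
        fun s => IsSet s ∧ allCommonCount s = 3).card = 108 := by
  have h0 := sets_card 0 (by norm_num)
  have h1 := sets_card 1 (by norm_num)
  have h2 := sets_card 2 (by norm_num)
  have h3 := sets_card 3 (by norm_num)
  obtain ⟨a0, a1, a2, a3⟩ := agree_counts
  rw [a0] at h0
  rw [a1] at h1
  rw [a2] at h2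
  rw [a3] at h3
  refine ⟨?_, ?_, ?_, ?_⟩
  · exact Nat.eq_of_mul_eq_mul_left (by norm_num : 0 < 6) h0
  · exact Nat.eq_of_mul_eq_mul_left (by norm_num : 0 < 6) h1
  · exact Nat.eq_of_mul_eq_mul_left (by norm_num : 0 < 6) h2
  · exact Nat.eq_of_mul_eq_mul_left (by norm_num : 0 < 6) h3
end

section
/- For every card c of the SET deck, the number of distinct induced deck maps that fix c is exactly 384 = 4!·2⁴. (These are exactly the self-isomorphisms of the 80-card hand consisting of the whole deck with the single card c removed.) -/
/-- The deck map induced by a permutation `ψ` of attributes and a family `θ` of value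
permutations: it sends a card `x` to the card `y` with `y (ψ a) = θ a (x a)` for all `a`. -/
def deckMap (ψ : Equiv.Perm (Fin 4)) (θ : Fin 4 → Equiv.Perm (Fin 3)) (x : Card) : Card :=
  fun b => θ (ψ.symm b) (x (ψ.symm b))

theorem deckMap_inj {ψ ψ' : Equiv.Perm (Fin 4)} {θ θ' : Fin 4 → Equiv.Perm (Fin 3)}
    (h : deckMap ψ θ = deckMap ψ' θ') : ψ = ψ' ∧ θ = θ' := by
  have h1 : ∀ (x : Card) b, θ (ψ.symm b) (x (ψ.symm b)) = θ' (ψ'.symm b) (x (ψ'.symm b)) :=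
    fun x b => congrFun (congrFun h x) b
  have h2 : ψ.symm = ψ'.symm := by
    ext1 b
    by_contra hne
    have e0 := h1 (fun _ => 0) b
    have e1 := h1 (Function.update (fun _ => 0) (ψ.symm b) 1) b
    rw [Function.update_self, Function.update_of_ne (Ne.symm hne)] at e1
    rw [← e0] at e1
    exact absurd ((θ _).injective e1) (by decide)
  have h3 : ψ = ψ' := by
    rw [← ψ.symm_symm, h2, Equiv.symm_symm]
  subst h3
  refine ⟨rfl, ?_⟩
  ext1 a
  ext1 v
  have := h1 (fun _ => v) (ψ a)
  simpa using this

theorem deckMap_fix (c : Card) (ψ : Equiv.Perm (Fin 4)) (θ : Fin 4 → Equiv.Perm (Fin 3)) :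
    deckMap ψ θ c = c ↔ ∀ a, θ a (c a) = c (ψ a) := by
  constructor
  · intro h a
    have := congrFun h (ψ a)
    simpa [deckMap] using this
  · intro h
    funext b
    simpa [deckMap] using h (ψ.symm b)

theorem card_stab (i j : Fin 3) : Fintype.card {σ : Equiv.Perm (Fin 3) // σ i = j} = 2 := by
  revert i j
  decide

/-- For every card `c`, there are exactly `384 = 4! · 2⁴` distinct induced deck maps
fixing `c` (the self-isomorphisms of the 80-card hand omitting `c`). -/
theorem card_deckMaps_fixing_card (c : Card) :
    Nat.card {f : Card → Card //
      (∃ (ψ : Equiv.Perm (Fin 4)) (θ : Fin 4 → Equiv.Perm (Fin 3)),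
        f = deckMap ψ θ) ∧ f c = c} = 384 := by
  let F : (Σ ψ : Equiv.Perm (Fin 4), ∀ a, {σ : Equiv.Perm (Fin 3) // σ (c a) = c (ψ a)}) →
      {f : Card → Card //
      (∃ (ψ : Equiv.Perm (Fin 4)) (θ : Fin 4 → Equiv.Perm (Fin 3)),
        f = deckMap ψ θ) ∧ f c = c} := fun p =>
    ⟨deckMap p.1 (fun a => (p.2 a).1), ⟨_, _, rfl⟩,
      (deckMap_fix c _ _).2 fun a => (p.2 a).2⟩
  have hF : Function.Bijective F := by
    constructor
    · rintro ⟨ψ, t⟩ ⟨ψ', t'⟩ h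
      have h0 : deckMap ψ (fun a => (t a).1) = deckMap ψ' (fun a => (t' a).1) :=
        congrArg Subtype.val h
      obtain ⟨h1, h2⟩ := deckMap_inj h0
      subst h1
      congr 1
      funext a
      exact Subtype.ext (congrFun h2 a)
    · rintro ⟨f, ⟨ψ, θ, rfl⟩, hf⟩
      exact ⟨⟨ψ, fun a => ⟨θ a, (deckMap_fix c _ _).1 hf a⟩⟩, rfl⟩
  rw [← Nat.card_eq_of_bijective F hF, Nat.card_eq_fintype_card, Fintype.card_sigma]
  simp only [Fintype.card_pi, card_stab]
  simp [Fintype.card_perm, Nat.factorial]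
end
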